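/- For all real q, ρ with |q| < 1 and |ρ| < 1, every y ∈ S(q), and every integer n ≥ 1, one has ∫_{S(q)} H_n(x|q)·f_CN(x|y,ρ,q) dx = ρⁿ·H_n(y|q). -/

import Mathlib

noncomputable section

open Finset

/-- The q-integer `[n]_q = 1 + q + ⋯ + q^{n-1}`. -/
def qInt (q : ℝ) (n : ℕ) : ℝ := ∑ i ∈ Finset.range n, q ^ i

/-- The q-factorial `[n]_q!`. -/
def qFact (q : ℝ) (n : ℕ) : ℝ := ∏ j ∈ Finset.range n, qInt q (j + 1)

/-- The q-binomial coefficient. -/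
def qBinom (q : ℝ) (n k : ℕ) : ℝ :=
  if k ≤ n then qFact q n / (qFact q (n - k) * qFact q k) else 0

/-- The finite q-Pochhammer symbol `(a;q)_n`. -/
def qPoch (a q : ℝ) (n : ℕ) : ℝ := ∏ j ∈ Finset.range n, (1 - a * q ^ j)

/-- The infinite q-Pochhammer symbol `(a;q)_∞`. -/
def qPochInf (a q : ℝ) : ℝ := ∏' j : ℕ, (1 - a * q ^ j)

/-- The q-Hermite polynomials `H_n(x|q)`. -/
def qHermite (q : ℝ) : ℕ → ℝ → ℝ
  | 0, _ => 1
  | 1, x => x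
  | n + 2, x => x * qHermite q (n + 1) x - qInt q (n + 1) * qHermite q n x

/-- The rescaled q-ultraspherical polynomials `R_n(x|β,q)`. -/
def qUltra (q β : ℝ) : ℕ → ℝ → ℝ
  | 0, _ => 1
  | 1, x => (1 - β) * x
  | n + 2, x => (1 - β * q ^ (n + 1)) * x * qUltra q β (n + 1) x
      - (1 - β ^ 2 * q ^ n) * qInt q (n + 1) * qUltra q β n x

/-- The Al-Salam–Chihara polynomials `P_n(x|y,ρ,q)`. -/
def ASC (q y ρ : ℝ) : ℕ → ℝ → ℝ
  | 0, _ => 1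
  | 1, x => x - ρ * y
  | n + 2, x => (x - ρ * y * q ^ (n + 1)) * ASC q y ρ (n + 1) x
      - (1 - ρ ^ 2 * q ^ n) * qInt q (n + 1) * ASC q y ρ n x

/-- The polynomials `B_n(y|q)` (q⁻¹-Hermite related). -/
def qB (q : ℝ) : ℕ → ℝ → ℝ
  | 0, _ => 1
  | 1, y => -y
  | n + 2, y => -q ^ (n + 1) * y * qB q (n + 1) y + q ^ n * qInt q (n + 1) * qB q n y

/-- The big q-Hermite polynomials `H_n(x|a,q)`. -/
def bigqHermite (q a : ℝ) : ℕ → ℝ → ℝ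
  | 0, _ => 1
  | 1, x => x - a
  | n + 2, x => (x - a * q ^ (n + 1)) * bigqHermite q a (n + 1) x
      - qInt q (n + 1) * bigqHermite q a n x

/-- The probabilistic Hermite polynomials `H_n(x)`. -/
def probHermite : ℕ → ℝ → ℝ
  | 0, _ => 1
  | 1, x => x
  | n + 2, x => x * probHermite (n + 1) x - (n + 1) * probHermite n x

/-- The probabilistic Hermite polynomials on ℂ. -/
def probHermiteC : ℕ → ℂ → ℂ
  | 0, _ => 1
  | 1, x => x
  | n + 2, x => x * probHermiteC (n + 1) x - (n + 1) * probHermiteC n x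

/-- The Chebyshev polynomials of the second kind. -/
def chebU : ℕ → ℝ → ℝ
  | 0, _ => 1
  | 1, x => 2 * x
  | n + 2, x => 2 * x * chebU (n + 1) x - chebU n x

/-- The Chebyshev polynomials of the first kind. -/
def chebT : ℕ → ℝ → ℝ
  | 0, _ => 1
  | 1, x => x
  | n + 2, x => 2 * x * chebT (n + 1) x - chebT n x

/-- `W_k(x,y,t|q)`. -/
def Wk (q x y t : ℝ) (k : ℕ) : ℝ :=
  (1 - t ^ 2 * q ^ (2 * k)) ^ 2 - (1 - q) * x * y * t * q ^ k * (1 + t ^ 2 * q ^ (2 * k))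
    + (1 - q) * t ^ 2 * q ^ (2 * k) * (x ^ 2 + y ^ 2)

/-- `V_k(x,a|q)`. -/
def Vk (q x a : ℝ) (k : ℕ) : ℝ :=
  1 - (1 - q) * a * x * q ^ k + (1 - q) * a ^ 2 * q ^ (2 * k)

/-- `L_k(x,a|q)`. -/
def Lk (q x a : ℝ) (k : ℕ) : ℝ :=
  (1 + a * q ^ k) ^ 2 - (1 - q) * x ^ 2 * a ^ 2 * q ^ k

/-- The support interval `S(q) = [-2/√(1-q), 2/√(1-q)]` for `|q| < 1`. -/
def Sq (q : ℝ) : Set ℝ := Set.Icc (-(2 / Real.sqrt (1 - q))) (2 / Real.sqrt (1 - q))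

open MeasureTheory

open Classical in
/-- The q-Normal density `f_N(x|q)` (zero outside `S(q)`). -/
def fN (q x : ℝ) : ℝ :=
  if x ∈ Sq q then
    qPochInf q q * Real.sqrt (1 - q) * (∏' j : ℕ, Lk q x 1 j) /
      (2 * Real.pi * Real.sqrt (Lk q x 1 0))
  else 0

/-- The Al-Salam–Chihara (conditional) density `f_CN(x|y,ρ,q)`. -/
def fCN (q y ρ x : ℝ) : ℝ :=
  fN q x * qPochInf (ρ ^ 2) q / ∏' k : ℕ, Wk q x y ρ k

/-!
In the variable `√(1 - q) x = 2 cos θ` the quotient `f_CN / f_N` is the Mehler kernel, and the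
Poisson–Mehler formula expands it as `∑ ρⁿ Hₙ(x) Hₙ(y) / (q;q)ₙ`. Integrating `Hₙ(x)` against this
expansion, orthogonality of the q-Hermite polynomials with respect to the q-Normal weight leaves
the single term `ρⁿ Hₙ(y)`.

The sum of the Mehler series satisfies a first-order functional equation under `t ↦ q t`, which
comes from the three-term recurrence; iterating it produces the infinite product. For the
orthogonality, replace the weight by the product of its first `M` factors. The moments of the even
polynomials against this truncation satisfy first-order recurrences in both parameters, so they can
be followed as `M → ∞`: every `Hₙ` with `n ≥ 1` integrates to zero, and the three-term recurrence
upgrades this to orthogonality.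
-/

open Filter Polynomial Topology

/-! ### The q-Pochhammer symbol -/

lemma qPoch_zero (a q : ℝ) : qPoch a q 0 = 1 := prod_range_zero _

lemma qPoch_succ (a q : ℝ) (n : ℕ) : qPoch a q (n + 1) = qPoch a q n * (1 - a * q ^ n) :=
  prod_range_succ _ _

lemma qPoch_self_succ (q : ℝ) (n : ℕ) : qPoch q q (n + 1) = qPoch q q n * (1 - q ^ (n + 1)) := by
  rw [qPoch_succ, pow_succ']

lemma one_sub_mul_pow_pos {a q : ℝ} (ha : |a| < 1) (hq : |q| < 1) (n : ℕ) :
    0 < 1 - a * q ^ n := by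
  have h : |a * q ^ n| < 1 := by
    rw [abs_mul, abs_pow]
    exact mul_lt_one_of_nonneg_of_lt_one_left (abs_nonneg a) ha
      (pow_le_one₀ (abs_nonneg q) hq.le)
  linarith [le_abs_self (a * q ^ n)]

lemma one_sub_pow_succ_pos {q : ℝ} (hq : |q| < 1) (n : ℕ) : 0 < 1 - q ^ (n + 1) := by
  simpa only [pow_succ'] using one_sub_mul_pow_pos hq hq n

lemma qPoch_pos {a q : ℝ} (ha : |a| < 1) (hq : |q| < 1) (n : ℕ) : 0 < qPoch a q n :=
  prod_pos fun j _ => one_sub_mul_pow_pos ha hq j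

lemma summable_norm_neg_mul_pow (a : ℝ) {q : ℝ} (hq : |q| < 1) :
    Summable fun j : ℕ => ‖-(a * q ^ j)‖ := by
  simpa [abs_mul, abs_pow] using
    (summable_geometric_of_lt_one (abs_nonneg q) hq).mul_left |a|

lemma tendsto_qPoch (a : ℝ) {q : ℝ} (hq : |q| < 1) :
    Tendsto (qPoch a q) atTop (𝓝 (qPochInf a q)) := by
  have h := (multipliable_one_add_of_summable
    (summable_norm_neg_mul_pow a hq)).hasProd.tendsto_prod_nat
  simp only [← sub_eq_add_neg] at h
  exact h

lemma qPochInf_ne_zero {a q : ℝ} (ha : |a| < 1) (hq : |q| < 1) : qPochInf a q ≠ 0 := by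
  have h := tprod_one_add_ne_zero_of_summable (f := fun j : ℕ => -(a * q ^ j))
    (fun j => by simpa only [← sub_eq_add_neg] using (one_sub_mul_pow_pos ha hq j).ne')
    (summable_norm_neg_mul_pow a hq)
  simpa only [qPochInf, sub_eq_add_neg] using h

lemma exists_qPoch_le (a : ℝ) {q : ℝ} (hq : |q| < 1) : ∃ C, ∀ n, qPoch a q n ≤ C := by
  obtain ⟨C, hC⟩ := (tendsto_qPoch a hq).bddAbove_range
  exact ⟨C, fun n => hC ⟨n, rfl⟩⟩

lemma exists_inv_qPoch_le {a q : ℝ} (ha : |a| < 1) (hq : |q| < 1) :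
    ∃ C, ∀ n, (qPoch a q n)⁻¹ ≤ C := by
  obtain ⟨C, hC⟩ := ((tendsto_qPoch a hq).inv₀ (qPochInf_ne_zero ha hq)).bddAbove_range
  exact ⟨C, fun n => hC ⟨n, rfl⟩⟩

/-! ### The continuous q-Hermite polynomials -/

/-- The continuous q-Hermite polynomials of Rogers, normalised to be monic in the variable
`x = 2 cos θ`; they are the `qHermite q n` rescaled so that their orthogonality interval
is `[-2, 2]`. -/
def contQHermite (q : ℝ) : ℕ → ℝ[X]
  | 0 => 1
  | 1 => X
  | n + 2 => X * contQHermite q (n + 1) - C (1 - q ^ (n + 1)) * contQHermite q n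

lemma contQHermite_zero (q : ℝ) : contQHermite q 0 = 1 := by
  rw [contQHermite]

lemma contQHermite_add_two (q : ℝ) (n : ℕ) :
    contQHermite q (n + 2) =
      X * contQHermite q (n + 1) - C (1 - q ^ (n + 1)) * contQHermite q n := by
  rw [contQHermite]

/- For `n = 0` the index `n - 1` is truncated, but then its coefficient vanishes. -/
lemma X_mul_contQHermite (q : ℝ) (n : ℕ) :
    X * contQHermite q n = contQHermite q (n + 1) + C (1 - q ^ n) * contQHermite q (n - 1) := by
  cases n with
  | zero => simp [contQHermite]
  | succ n => rw [contQHermite_add_two, Nat.add_sub_cancel]; ring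

lemma X_sq_mul_contQHermite (q : ℝ) (n : ℕ) :
    X ^ 2 * contQHermite q n = contQHermite q (n + 2)
      + C (2 - q ^ n - q ^ (n + 1)) * contQHermite q n
      + C ((1 - q ^ n) * (1 - q ^ (n - 1))) * contQHermite q (n - 2) := by
  have h₁ := X_mul_contQHermite q (n + 1)
  have h₂ : X * (C (1 - q ^ n) * contQHermite q (n - 1)) = C (1 - q ^ n) *
      (contQHermite q n + C (1 - q ^ (n - 1)) * contQHermite q (n - 2)) := by
    rcases n with _ | n
    · simp
    · rw [mul_left_comm, Nat.add_sub_cancel, X_mul_contQHermite q n, Nat.add_sub_add_right n 1 1]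
  rw [pow_two, mul_assoc, X_mul_contQHermite q n, mul_add, h₂, h₁]
  simp only [Nat.add_sub_cancel, C_sub, C_mul, C_1, C_ofNat]
  ring

lemma one_sub_mul_qInt (q : ℝ) (n : ℕ) : (1 - q) * qInt q n = 1 - q ^ n :=
  mul_neg_geom_sum q n

lemma eval_mul_contQHermite {q s : ℝ} (hs : s ^ 2 = 1 - q) (x : ℝ) (n : ℕ) :
    (contQHermite q n).eval (s * x) = s ^ n * qHermite q n x := by
  induction n using Nat.twoStepInduction with
  | zero => simp [contQHermite, qHermite]
  | one => simp [contQHermite, qHermite]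
  | more n ih₀ ih₁ =>
    simp only [contQHermite_add_two, qHermite, eval_sub, eval_mul, eval_X, eval_C, ih₀, ih₁,
      ← one_sub_mul_qInt, ← hs]
    ring

lemma eval_neg_contQHermite (q x : ℝ) (n : ℕ) :
    (contQHermite q n).eval (-x) = (-1) ^ n * (contQHermite q n).eval x := by
  induction n using Nat.twoStepInduction with
  | zero => simp [contQHermite]
  | one => simp [contQHermite]
  | more n ih₀ ih₁ =>
    simp only [contQHermite_add_two, eval_sub, eval_mul, eval_X, eval_C, ih₀, ih₁]
    ring

section RogersExpansion

variable {q : ℝ} {A : Type*} [CommRing A] [Algebra ℝ A]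

/-- Euler's q-exponential series `∑ Xⁿ / (q;q)ₙ`. -/
def qExpSeries (q : ℝ) (A : Type*) [CommRing A] [Algebra ℝ A] : PowerSeries A :=
  PowerSeries.mk fun n => algebraMap ℝ A (qPoch q q n)⁻¹

lemma rescale_qExpSeries (hq : |q| < 1) :
    PowerSeries.rescale (algebraMap ℝ A q) (qExpSeries q A) =
      (1 - PowerSeries.X) * qExpSeries q A := by
  ext n
  cases n with
  | zero => simp [qExpSeries, sub_mul]
  | succ n =>
    have h₀ := (qPoch_pos hq hq n).ne'
    have h₁ := (one_sub_pow_succ_pos hq n).ne'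
    simp only [qExpSeries, PowerSeries.coeff_rescale, PowerSeries.coeff_mk, sub_mul, one_mul,
      map_sub, PowerSeries.coeff_succ_X_mul, ← map_pow, ← map_mul, qPoch_self_succ]
    rw [← map_sub]
    congr 1
    field_simp
    ring

/-- Rogers' generating series `∑ Hₙ(z + w|q) Xⁿ / (q;q)ₙ`, given as a product of two Euler series
when `z w = 1`. -/
def contQHermiteSeries (q : ℝ) (z w : A) : PowerSeries A :=
  PowerSeries.rescale z (qExpSeries q A) * PowerSeries.rescale w (qExpSeries q A)

lemma coeff_contQHermiteSeries (z w : A) (n : ℕ) :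
    PowerSeries.coeff n (contQHermiteSeries q z w) = ∑ p ∈ antidiagonal n,
      ((qPoch q q p.1)⁻¹ * (qPoch q q p.2)⁻¹) • (z ^ p.1 * w ^ p.2) := by
  rw [contQHermiteSeries, PowerSeries.coeff_mul]
  refine sum_congr rfl fun p _ => ?_
  simp only [PowerSeries.coeff_rescale, qExpSeries, PowerSeries.coeff_mk, Algebra.smul_def, map_mul]
  ring

lemma rescale_contQHermiteSeries (hq : |q| < 1) {z w : A} (hzw : z * w = 1) :
    PowerSeries.rescale (algebraMap ℝ A q) (contQHermiteSeries q z w) =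
      (1 - PowerSeries.C (z + w) * PowerSeries.X + PowerSeries.X * PowerSeries.X) *
        contQHermiteSeries q z w := by
  have h (v : A) : PowerSeries.rescale (algebraMap ℝ A q)
      (PowerSeries.rescale v (qExpSeries q A)) =
        (1 - PowerSeries.C v * PowerSeries.X) * PowerSeries.rescale v (qExpSeries q A) := by
    rw [PowerSeries.rescale_rescale, mul_comm v, ← PowerSeries.rescale_rescale,
      rescale_qExpSeries hq, map_mul, map_sub, map_one, PowerSeries.rescale_X]
  have hC : PowerSeries.C z * PowerSeries.C w = (1 : PowerSeries A) := by
    rw [← map_mul, hzw, map_one]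
  rw [contQHermiteSeries, map_mul, h, h, map_add]
  linear_combination (PowerSeries.X ^ 2 * (PowerSeries.rescale z (qExpSeries q A) *
    PowerSeries.rescale w (qExpSeries q A))) * hC

lemma aeval_add_contQHermite_eq_coeff (hq : |q| < 1) {z w : A} (hzw : z * w = 1) (n : ℕ) :
    aeval (z + w) (contQHermite q n) =
      algebraMap ℝ A (qPoch q q n) * PowerSeries.coeff n (contQHermiteSeries q z w) := by
  have h₀ : PowerSeries.coeff 0 (contQHermiteSeries q z w) = 1 := by
    simp only [coeff_contQHermiteSeries, Nat.antidiagonal_zero, sum_singleton, qPoch_zero, inv_one,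
      pow_zero, mul_one, one_smul]
  have hrec (n : ℕ) := congrArg (PowerSeries.coeff n) (rescale_contQHermiteSeries hq hzw)
  simp only [PowerSeries.coeff_rescale, add_mul, sub_mul, one_mul, map_add, map_sub, mul_assoc,
    PowerSeries.coeff_C_mul] at hrec
  induction n using Nat.twoStepInduction with
  | zero => rw [contQHermite_zero, qPoch_zero, h₀, map_one, map_one, mul_one]
  | one =>
    have h₁ := hrec 1
    simp only [PowerSeries.coeff_succ_X_mul, PowerSeries.coeff_zero_X_mul, h₀] at h₁
    simp only [contQHermite, aeval_X, qPoch_self_succ, qPoch_zero, map_mul, map_sub, map_one,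
      map_pow]
    linear_combination h₁
  | more n ih₀ ih₁ =>
    have h₂ := hrec (n + 2)
    simp only [PowerSeries.coeff_succ_X_mul] at h₂
    simp only [contQHermite_add_two, map_sub, map_mul, aeval_X, aeval_C, ih₀, ih₁,
      qPoch_self_succ, map_one, map_pow]
    linear_combination
      (algebraMap ℝ A (qPoch q q n) * (1 - algebraMap ℝ A q ^ (n + 1))) * h₂

lemma aeval_add_contQHermite (hq : |q| < 1) {z w : A} (hzw : z * w = 1) (n : ℕ) :
    aeval (z + w) (contQHermite q n) = ∑ p ∈ antidiagonal n,
      (qPoch q q n * ((qPoch q q p.1)⁻¹ * (qPoch q q p.2)⁻¹)) • (z ^ p.1 * w ^ p.2) := by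
  rw [aeval_add_contQHermite_eq_coeff hq hzw, coeff_contQHermiteSeries, ← Algebra.smul_def,
    smul_sum]
  simp only [smul_smul]

end RogersExpansion

lemma eval_two_mul_cos_contQHermite {q : ℝ} (hq : |q| < 1) (θ : ℝ) (n : ℕ) :
    (contQHermite q n).eval (2 * Real.cos θ) = ∑ p ∈ antidiagonal n,
      qPoch q q n * ((qPoch q q p.1)⁻¹ * (qPoch q q p.2)⁻¹) *
        Real.cos (((p.1 : ℝ) - p.2) * θ) := by
  have hzw : Complex.exp (θ * Complex.I) * Complex.exp (-θ * Complex.I) = 1 := by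
    rw [← Complex.exp_add, ← add_mul, add_neg_cancel, zero_mul, Complex.exp_zero]
  have h := congrArg Complex.re (aeval_add_contQHermite hq hzw n)
  rw [← Complex.two_cos, ← Complex.ofReal_cos, ← Complex.ofReal_ofNat, ← Complex.ofReal_mul,
    ← Complex.coe_algebraMap, aeval_algebraMap_apply, Complex.coe_algebraMap, Complex.ofReal_re,
    coe_aeval_eq_eval, Complex.re_sum] at h
  rw [h]
  refine sum_congr rfl fun p _ => ?_
  rw [Complex.smul_re, smul_eq_mul, ← Complex.exp_nat_mul, ← Complex.exp_nat_mul,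
    ← Complex.exp_add, ← Complex.exp_ofReal_mul_I_re]
  congr 3
  push_cast
  ring

lemma exists_eq_two_mul_cos {x : ℝ} (hx : |x| ≤ 2) : ∃ θ, x = 2 * Real.cos θ := by
  obtain ⟨h₁, h₂⟩ := abs_le.1 hx
  exact ⟨Real.arccos (x / 2), by rw [Real.cos_arccos (by linarith) (by linarith)]; ring⟩

lemma abs_two_mul_cos_le (θ : ℝ) : |2 * Real.cos θ| ≤ 2 := by
  rw [abs_mul, abs_two]
  linarith [Real.abs_cos_le_one θ]

lemma exists_abs_eval_contQHermite_le {q : ℝ} (hq : |q| < 1) :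
    ∃ C, 0 ≤ C ∧ ∀ n : ℕ, ∀ x : ℝ, |x| ≤ 2 → |(contQHermite q n).eval x| ≤ C * (n + 1) := by
  obtain ⟨B, hB⟩ := exists_qPoch_le q hq
  obtain ⟨D, hD⟩ := exists_inv_qPoch_le hq hq
  have hpos (n : ℕ) := qPoch_pos hq hq n
  have hB₀ : 0 ≤ B := (hpos 0).le.trans (hB 0)
  have hD₀ : 0 ≤ D := (inv_pos.2 (hpos 0)).le.trans (hD 0)
  refine ⟨B * (D * D), by positivity, fun n x hx => ?_⟩
  obtain ⟨θ, rfl⟩ := exists_eq_two_mul_cos hx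
  rw [eval_two_mul_cos_contQHermite hq]
  have hterm (p : ℕ × ℕ) : |qPoch q q n * ((qPoch q q p.1)⁻¹ * (qPoch q q p.2)⁻¹) *
      Real.cos (((p.1 : ℝ) - p.2) * θ)| ≤ B * (D * D) := by
    have h (k : ℕ) : 0 ≤ (qPoch q q k)⁻¹ := (inv_pos.2 (hpos k)).le
    rw [abs_mul, abs_of_nonneg (mul_nonneg (hpos n).le (mul_nonneg (h _) (h _)))]
    refine (mul_le_of_le_one_right (mul_nonneg (hpos n).le (mul_nonneg (h _) (h _)))
      (Real.abs_cos_le_one _)).trans ?_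
    exact mul_le_mul (hB n) (mul_le_mul (hD _) (hD _) (h _) hD₀) (mul_nonneg (h _) (h _)) hB₀
  calc |∑ p ∈ antidiagonal n, qPoch q q n * ((qPoch q q p.1)⁻¹ * (qPoch q q p.2)⁻¹) *
        Real.cos (((p.1 : ℝ) - p.2) * θ)|
      ≤ #(antidiagonal n) • (B * (D * D)) :=
        (abs_sum_le_sum_abs _ _).trans (sum_le_card_nsmul _ _ _ fun p _ => hterm p)
    _ = B * (D * D) * (n + 1) := by
        rw [Nat.card_antidiagonal, nsmul_eq_mul, mul_comm]
        push_cast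
        rfl

/-! ### The Poisson–Mehler formula -/

lemma hasSum_coeff_polynomial_mul {F : PowerSeries ℝ} {t s : ℝ}
    (h : HasSum (fun n => PowerSeries.coeff n F * t ^ n) s) (p : ℝ[X]) :
    HasSum (fun n => PowerSeries.coeff n ((p : PowerSeries ℝ) * F) * t ^ n) (p.eval t * s) := by
  induction p using Polynomial.induction_on' with
  | add p r hp hr => simpa [add_mul] using hp.add hr
  | monomial k a =>
    have hcoeff (n : ℕ) : PowerSeries.coeff (n + k) (((monomial k a : ℝ[X]) : PowerSeries ℝ) * F) *
        t ^ (n + k) = (monomial k a).eval t * (PowerSeries.coeff n F * t ^ n) := by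
      rw [← C_mul_X_pow_eq_monomial, Polynomial.coe_mul, Polynomial.coe_C, Polynomial.coe_pow,
        Polynomial.coe_X, mul_assoc, PowerSeries.coeff_C_mul, PowerSeries.coeff_X_pow_mul]
      simp only [eval_mul, eval_C, eval_pow, eval_X]
      ring
    rw [← hasSum_nat_add_iff' k]
    simp only [hcoeff]
    rw [sum_eq_zero, sub_zero]
    · exact h.mul_left _
    · intro n hn
      rw [← C_mul_X_pow_eq_monomial, Polynomial.coe_mul, Polynomial.coe_C, Polynomial.coe_pow,
        Polynomial.coe_X, mul_assoc, PowerSeries.coeff_C_mul, PowerSeries.coeff_X_pow_mul',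
        if_neg (by simpa using hn), mul_zero, zero_mul]

section Mehler

variable {q x y : ℝ}

/-- The formal series `∑ Hₙ₊ₐ(x|q) Hₙ₊ᵦ(y|q) Xⁿ / (q;q)ₙ`; the shifts `a` and `b` close the family
under the three-term recurrences in `x` and `y`. -/
def mehlerSeries (q x y : ℝ) (a b : ℕ) : PowerSeries ℝ :=
  PowerSeries.mk fun n =>
    (contQHermite q (n + a)).eval x * (contQHermite q (n + b)).eval y / qPoch q q n

lemma mehlerSeries_comm (q x y : ℝ) (a b : ℕ) :
    mehlerSeries q x y a b = mehlerSeries q y x b a := by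
  simp only [mehlerSeries, mul_comm]

lemma C_left_mul_mehlerSeries (hq : |q| < 1) (b : ℕ) :
    PowerSeries.C x * mehlerSeries q x y 0 b =
      mehlerSeries q x y 1 b + PowerSeries.X * mehlerSeries q x y 0 (b + 1) := by
  ext n
  have h := congrArg (eval x) (X_mul_contQHermite q n)
  simp only [eval_mul, eval_X, eval_add, eval_C] at h
  rw [map_add, PowerSeries.coeff_C_mul]
  cases n with
  | zero =>
    simp only [mehlerSeries, PowerSeries.coeff_zero_X_mul, PowerSeries.coeff_mk, pow_zero,
      sub_self, zero_mul, add_zero, zero_add] at h ⊢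
    linear_combination ((contQHermite q b).eval y / qPoch q q 0) * h
  | succ n =>
    have h₁ := (one_sub_pow_succ_pos hq n).ne'
    have h₀ := (qPoch_pos hq hq n).ne'
    simp only [mehlerSeries, PowerSeries.coeff_succ_X_mul, PowerSeries.coeff_mk, add_zero,
      qPoch_self_succ, Nat.add_sub_cancel, add_right_comm n 1 b] at h ⊢
    field_simp
    linear_combination (contQHermite q (n + b + 1)).eval y * h

lemma C_right_mul_mehlerSeries (hq : |q| < 1) (a : ℕ) :
    PowerSeries.C y * mehlerSeries q x y a 0 =
      mehlerSeries q x y a 1 + PowerSeries.X * mehlerSeries q x y (a + 1) 0 := by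
  simpa only [mehlerSeries_comm q x y] using C_left_mul_mehlerSeries (x := y) (y := x) hq a

lemma mehlerSeries_sub_rescale (hq : |q| < 1) (a b : ℕ) :
    mehlerSeries q x y a b - PowerSeries.rescale q (mehlerSeries q x y a b) =
      PowerSeries.X * mehlerSeries q x y (a + 1) (b + 1) := by
  ext n
  rw [map_sub, PowerSeries.coeff_rescale]
  cases n with
  | zero => rw [PowerSeries.coeff_zero_X_mul, pow_zero, one_mul, sub_self]
  | succ n =>
    have h₁ := (one_sub_pow_succ_pos hq n).ne'
    have h₀ := (qPoch_pos hq hq n).ne'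
    simp only [mehlerSeries, PowerSeries.coeff_succ_X_mul, PowerSeries.coeff_mk, qPoch_self_succ,
      add_right_comm n 1]
    simp only [← add_assoc]
    field_simp

lemma mehlerSeries_two (q x y : ℝ) (b : ℕ) :
    mehlerSeries q x y 2 b = PowerSeries.C x * mehlerSeries q x y 1 b - mehlerSeries q x y 0 b
      + PowerSeries.C q * PowerSeries.rescale q (mehlerSeries q x y 0 b) := by
  ext n
  simp only [mehlerSeries, map_add, map_sub, PowerSeries.coeff_C_mul, PowerSeries.coeff_rescale,
    PowerSeries.coeff_mk, contQHermite_add_two, eval_sub, eval_mul, eval_X, eval_C, add_zero]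
  ring

/-- The `k = 0` factor `W₀` of the denominator in the Poisson–Mehler formula, normalised to the
variables `x = 2 cos θ` and `y = 2 cos φ`. -/
def mehlerFactor (x y t : ℝ) : ℝ :=
  (1 - t ^ 2) ^ 2 - x * y * t * (1 + t ^ 2) + t ^ 2 * (x ^ 2 + y ^ 2)

lemma rescale_mehlerSeries (hq : |q| < 1) :
    (((1 - X ^ 2) * (1 - C q * X ^ 2) : ℝ[X]) : PowerSeries ℝ) *
        PowerSeries.rescale q (mehlerSeries q x y 0 0) =
      (((1 - X ^ 2) ^ 2 - X * (C x - X * C y) * (C y - X * C x) : ℝ[X]) : PowerSeries ℝ) *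
        mehlerSeries q x y 0 0 := by
  have hx := C_left_mul_mehlerSeries (x := x) (y := y) hq 0
  have hy := C_right_mul_mehlerSeries (x := x) (y := y) hq 0
  have hy₁ := C_right_mul_mehlerSeries (x := x) (y := y) hq 1
  have h₂ := mehlerSeries_two q x y 0
  have hq' := mehlerSeries_sub_rescale (x := x) (y := y) hq 0 0
  simp only [zero_add, one_add_one_eq_two] at hx hy hy₁ h₂ hq'
  push_cast
  rw [h₂] at hy₁
  linear_combination (1 - PowerSeries.X ^ 2) * (PowerSeries.X * hy₁ - hq') +
    PowerSeries.X * (PowerSeries.C y - PowerSeries.X * PowerSeries.C x) * (hx - PowerSeries.X * hy)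

lemma summable_add_one_pow_mul_pow (k : ℕ) {r : ℝ} (hr : |r| < 1) :
    Summable fun n : ℕ => ((n : ℝ) + 1) ^ k * r ^ n := by
  refine Summable.of_norm_bounded
    (summable_descFactorial_mul_geometric_of_norm_lt_one k (r := |r|) (by rwa [norm_abs_eq_norm]))
    fun n => ?_
  have h := Nat.pow_sub_le_descFactorial (n + k) k
  rw [add_right_comm, Nat.add_sub_cancel] at h
  rw [norm_mul, norm_pow, norm_pow, Real.norm_eq_abs r, Real.norm_of_nonneg (by positivity)]
  exact mul_le_mul_of_nonneg_right (by exact_mod_cast h) (by positivity)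

/-- The coefficient of `tⁿ` in the Poisson–Mehler series. -/
def mehlerCoeff (q x y : ℝ) (n : ℕ) : ℝ :=
  (contQHermite q n).eval x * (contQHermite q n).eval y / qPoch q q n

lemma coeff_mehlerSeries_zero_zero (q x y : ℝ) (n : ℕ) :
    PowerSeries.coeff n (mehlerSeries q x y 0 0) = mehlerCoeff q x y n :=
  PowerSeries.coeff_mk _ _

lemma exists_abs_mehlerCoeff_le (hq : |q| < 1) :
    ∃ C, ∀ n : ℕ, ∀ x y : ℝ, |x| ≤ 2 → |y| ≤ 2 →
      |mehlerCoeff q x y n| ≤ C * ((n : ℝ) + 1) ^ 2 := by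
  obtain ⟨C, hC, hH⟩ := exists_abs_eval_contQHermite_le hq
  obtain ⟨D, hD⟩ := exists_inv_qPoch_le hq hq
  refine ⟨C * C * D, fun n x y hx hy => ?_⟩
  have hpos := (inv_pos.2 (qPoch_pos hq hq n)).le
  rw [mehlerCoeff, div_eq_mul_inv, abs_mul, abs_mul, abs_of_nonneg hpos]
  calc |(contQHermite q n).eval x| * |(contQHermite q n).eval y| * (qPoch q q n)⁻¹
      ≤ (C * (n + 1)) * (C * (n + 1)) * D :=
        mul_le_mul (mul_le_mul (hH n x hx) (hH n y hy) (abs_nonneg _) (by positivity)) (hD n)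
          hpos (by positivity)
    _ = C * C * D * ((n : ℝ) + 1) ^ 2 := by ring

lemma summable_mehler {t : ℝ} (hq : |q| < 1) (hx : |x| ≤ 2) (hy : |y| ≤ 2) (ht : |t| < 1) :
    Summable fun n => mehlerCoeff q x y n * t ^ n := by
  obtain ⟨C, hC⟩ := exists_abs_mehlerCoeff_le hq
  refine Summable.of_norm_bounded
    ((summable_add_one_pow_mul_pow 2 (r := |t|) (by rwa [abs_abs])).mul_left C) fun n => ?_
  rw [norm_mul, norm_pow, Real.norm_eq_abs, Real.norm_eq_abs, ← mul_assoc]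
  exact mul_le_mul_of_nonneg_right (hC n x y hx hy) (by positivity)

lemma mehlerFactor_mul_tsum {t : ℝ} (hq : |q| < 1) (hx : |x| ≤ 2) (hy : |y| ≤ 2)
    (ht : |t| < 1) :
    mehlerFactor x y t * ∑' n, mehlerCoeff q x y n * t ^ n =
      (1 - t ^ 2) * (1 - t ^ 2 * q) * ∑' n, mehlerCoeff q x y n * (t * q) ^ n := by
  have htq : |t * q| < 1 := by
    rw [abs_mul]
    exact mul_lt_one_of_nonneg_of_lt_one_left (abs_nonneg t) ht hq.le
  have h : HasSum (fun n => PowerSeries.coeff n (mehlerSeries q x y 0 0) * t ^ n)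
      (∑' n, mehlerCoeff q x y n * t ^ n) := by
    simpa only [coeff_mehlerSeries_zero_zero] using (summable_mehler hq hx hy ht).hasSum
  have h' : HasSum (fun n => PowerSeries.coeff n (PowerSeries.rescale q (mehlerSeries q x y 0 0)) *
      t ^ n) (∑' n, mehlerCoeff q x y n * (t * q) ^ n) := by
    simpa only [PowerSeries.coeff_rescale, coeff_mehlerSeries_zero_zero, mul_pow, mul_assoc,
      mul_left_comm (q ^ _), mul_comm (q ^ _)] using (summable_mehler hq hx hy htq).hasSum
  have key := (hasSum_coeff_polynomial_mul h' _).unique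
    (rescale_mehlerSeries (x := x) (y := y) hq ▸ hasSum_coeff_polynomial_mul h _)
  simp only [eval_mul, eval_sub, eval_pow, eval_one, eval_X, eval_C] at key
  rw [mehlerFactor]
  linear_combination -key

lemma prod_mehlerFactor_mul_tsum {t : ℝ} (hq : |q| < 1) (hx : |x| ≤ 2) (hy : |y| ≤ 2)
    (ht : |t| < 1) (N : ℕ) :
    (∏ k ∈ range N, mehlerFactor x y (t * q ^ k)) * ∑' n, mehlerCoeff q x y n * t ^ n =
      qPoch (t ^ 2) q (2 * N) * ∑' n, mehlerCoeff q x y n * (t * q ^ N) ^ n := by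
  induction N with
  | zero => simp [qPoch]
  | succ N ih =>
    have htq : |t * q ^ N| < 1 := by
      rw [abs_mul, abs_pow]
      exact mul_lt_one_of_nonneg_of_lt_one_left (abs_nonneg t) ht
        (pow_le_one₀ (abs_nonneg q) hq.le)
    rw [prod_range_succ, mul_right_comm, ih, mul_right_comm, mul_assoc,
      mehlerFactor_mul_tsum hq hx hy htq, mul_add_one, qPoch_succ, qPoch_succ, mul_assoc t,
      ← pow_succ]
    ring

lemma summable_norm_mehlerFactor_sub_one (x y t : ℝ) (hq : |q| < 1) :
    Summable fun k : ℕ => ‖mehlerFactor x y (t * q ^ k) - 1‖ := by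
  have hpow (j : ℕ) : Summable fun k : ℕ => (q ^ k) ^ (j + 1) := by
    simp only [← pow_mul, mul_comm _ (j + 1)]
    simp only [pow_mul]
    exact summable_geometric_of_abs_lt_one
      (by rw [abs_pow]; exact pow_lt_one₀ (abs_nonneg q) hq j.succ_ne_zero)
  refine Summable.norm ((((hpow 1).mul_left ((x ^ 2 + y ^ 2 - 2) * t ^ 2)).add
    ((hpow 3).mul_left (t ^ 4))).sub (((hpow 0).mul_left (x * y * t)).add
    ((hpow 2).mul_left (x * y * t ^ 3))) |>.congr fun k => ?_)
  rw [mehlerFactor]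
  ring

lemma multipliable_mehlerFactor (x y t : ℝ) (hq : |q| < 1) :
    Multipliable fun k : ℕ => mehlerFactor x y (t * q ^ k) := by
  simpa using multipliable_one_add_of_summable (summable_norm_mehlerFactor_sub_one x y t hq)

lemma tendsto_tsum_mehler {t : ℝ} (hq : |q| < 1) (hx : |x| ≤ 2) (hy : |y| ≤ 2) (ht : |t| < 1) :
    Tendsto (fun N : ℕ => ∑' n, mehlerCoeff q x y n * (t * q ^ N) ^ n) atTop (𝓝 1) := by
  have h0 : ∑' n, mehlerCoeff q x y n * (0 : ℝ) ^ n = 1 := by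
    rw [tsum_eq_single 0 fun n hn => by rw [zero_pow hn, mul_zero]]
    simp [mehlerCoeff, contQHermite_zero, qPoch_zero]
  rw [← h0]
  refine tendsto_tsum_of_dominated_convergence (summable_mehler hq hx hy ht).norm (fun n => ?_)
    (Eventually.of_forall fun N n => ?_)
  · have h : Tendsto (fun N : ℕ => t * q ^ N) atTop (𝓝 0) := by
      simpa using (tendsto_pow_atTop_nhds_zero_of_abs_lt_one hq).const_mul t
    exact (h.pow n).const_mul _
  · rw [norm_mul, norm_mul, norm_pow, norm_pow, norm_mul, norm_pow]
    gcongr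
    exact mul_le_of_le_one_right (norm_nonneg t) (pow_le_one₀ (norm_nonneg q) hq.le)

/-- The Mehler kernel of the continuous q-Hermite polynomials, in product form. -/
def mehlerKernel (q x y t : ℝ) : ℝ :=
  qPochInf (t ^ 2) q / ∏' k : ℕ, mehlerFactor x y (t * q ^ k)

/- Iterating the functional equation `t ↦ q t` turns the series into the quotient of products. -/
lemma hasSum_mehler {t : ℝ} (hq : |q| < 1) (hx : |x| ≤ 2) (hy : |y| ≤ 2) (ht : |t| < 1) :
    HasSum (fun n => mehlerCoeff q x y n * t ^ n) (mehlerKernel q x y t) := by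
  rw [mehlerKernel]
  have hleft := (multipliable_mehlerFactor x y t hq).hasProd.tendsto_prod_nat.mul_const
    (∑' n, mehlerCoeff q x y n * t ^ n)
  have hright := ((tendsto_qPoch (t ^ 2) hq).comp (tendsto_id.const_mul_atTop' two_pos)).mul
    (tendsto_tsum_mehler hq hx hy ht)
  have h := tendsto_nhds_unique hleft (hright.congr fun N =>
    (prod_mehlerFactor_mul_tsum hq hx hy ht N).symm)
  rw [mul_one] at h
  have hne : qPochInf (t ^ 2) q ≠ 0 :=
    qPochInf_ne_zero (by rw [abs_pow]; exact pow_lt_one₀ (abs_nonneg t) ht two_ne_zero) hq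
  rw [← h, mul_div_cancel_left₀ _ (left_ne_zero_of_mul (h.trans_ne hne))]
  exact (summable_mehler hq hx hy ht).hasSum

end Mehler

/-! ### Orthogonality -/

section ThreeTermRecurrence

variable {R A M : Type*} [CommRing R] [CommRing A] [Algebra R A] [AddCommGroup M] [Module R M]
  {L : A →ₗ[R] M} {x : A} {p : ℕ → A} {c : ℕ → R}

lemma apply_succ_mul_of_threeTerm (hrec : ∀ n, x * p n = p (n + 1) + c n • p (n - 1)) (m n : ℕ) :
    L (p (m + 1) * p n) =
      L (p m * p (n + 1)) + c n • L (p m * p (n - 1)) - c m • L (p (m - 1) * p n) := by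
  have h : p (m + 1) * p n =
      p m * p (n + 1) + c n • (p m * p (n - 1)) - c m • (p (m - 1) * p n) := by
    simp only [Algebra.smul_def] at hrec ⊢
    linear_combination p m * hrec n - p n * hrec m
  rw [h, map_sub, map_add, map_smul, map_smul]

/- The easy half of Favard's theorem. -/
lemma apply_mul_eq_zero_of_threeTerm (hp : p 0 = 1)
    (hrec : ∀ n, x * p n = p (n + 1) + c n • p (n - 1)) (hL : ∀ n, L (p (n + 1)) = 0)
    {m n : ℕ} (hmn : m < n) : L (p m * p n) = 0 := by
  induction m using Nat.strong_induction_on generalizing n with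
  | _ m ih =>
    cases m with
    | zero => rw [hp, one_mul, ← Nat.sub_add_cancel hmn, hL]
    | succ m =>
      rw [apply_succ_mul_of_threeTerm hrec, ih m (by lia) (by lia), ih m (by lia) (by lia),
        ih (m - 1) (by lia) (by lia), smul_zero, smul_zero, add_zero, sub_zero]

lemma apply_mul_self_succ_of_threeTerm (hp : p 0 = 1)
    (hrec : ∀ n, x * p n = p (n + 1) + c n • p (n - 1)) (hL : ∀ n, L (p (n + 1)) = 0) (n : ℕ) :
    L (p (n + 1) * p (n + 1)) = c (n + 1) • L (p n * p n) := by
  have h₁ : L (p n * p (n + 1 + 1)) = 0 := apply_mul_eq_zero_of_threeTerm hp hrec hL (by lia)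
  have h₂ : L (p (n - 1) * p (n + 1)) = 0 := apply_mul_eq_zero_of_threeTerm hp hrec hL (by lia)
  rw [apply_succ_mul_of_threeTerm hrec, h₁, h₂, Nat.add_sub_cancel, smul_zero, zero_add, sub_zero]

end ThreeTermRecurrence

/-- Integration of `P (2 cos θ)` over `[0, π]`. -/
def cosIntegral : ℝ[X] →ₗ[ℝ] ℝ where
  toFun P := ∫ θ in 0..Real.pi, P.eval (2 * Real.cos θ)
  map_add' P Q := by
    simp only [eval_add]
    exact intervalIntegral.integral_add (Continuous.intervalIntegrable (by fun_prop) _ _)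
      (Continuous.intervalIntegrable (by fun_prop) _ _)
  map_smul' r P := by
    simp only [eval_smul, RingHom.id_apply, smul_eq_mul, intervalIntegral.integral_const_mul]

lemma cosIntegral_apply (P : ℝ[X]) :
    cosIntegral P = ∫ θ in 0..Real.pi, P.eval (2 * Real.cos θ) := rfl

lemma integral_cos_natCast_sub_mul (i j : ℕ) :
    ∫ θ in 0..Real.pi, Real.cos (((i : ℝ) - j) * θ) = if i = j then Real.pi else 0 := by
  split_ifs with h
  · simp [h]
  · have h' : (i : ℝ) - j ≠ 0 := sub_ne_zero.2 (by exact_mod_cast h)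
    rw [intervalIntegral.integral_comp_mul_left _ h', integral_cos]
    have := Real.sin_int_mul_pi (i - j)
    push_cast at this
    rw [this, mul_zero, Real.sin_zero, sub_zero, smul_zero]

section TruncatedMoments

variable {q : ℝ}

lemma cosIntegral_contQHermite (hq : |q| < 1) (m : ℕ) :
    cosIntegral (contQHermite q (2 * m)) =
      Real.pi * qPoch q q (2 * m) / qPoch q q m ^ 2 := by
  simp only [cosIntegral_apply, eval_two_mul_cos_contQHermite hq]
  rw [intervalIntegral.integral_finsetSum fun p _ =>
    Continuous.intervalIntegrable (by fun_prop) _ _]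
  simp only [intervalIntegral.integral_const_mul, integral_cos_natCast_sub_mul]
  rw [sum_eq_single (m, m)]
  · rw [if_pos rfl]
    ring
  · rintro ⟨i, j⟩ hij hne
    rw [HasAntidiagonal.mem_antidiagonal] at hij
    rw [if_neg (fun h : i = j => hne (Prod.ext (by lia) (by lia))), mul_zero]
  · exact fun h => absurd (HasAntidiagonal.mem_antidiagonal.2 (two_mul m).symm) h

/-- The product of the first `M` factors of the q-Hermite weight in `x = 2 cos θ`. -/
def truncWeight (q : ℝ) (M : ℕ) : ℝ[X] :=
  ∏ j ∈ range M, (C ((1 + q ^ j) ^ 2) - C (q ^ j) * X ^ 2)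

/-- The even moments `∫ H₂ₘ W_M` of the truncated weight `W_M`. They are proportional to the
q-analogues of the super Catalan numbers. -/
def truncMoment (q : ℝ) (M m : ℕ) : ℝ :=
  cosIntegral (contQHermite q (2 * m) * truncWeight q M)

lemma truncMoment_add_one (q : ℝ) (M m : ℕ) :
    truncMoment q (M + 1) m =
      ((1 + q ^ M) ^ 2 - q ^ M * (2 - q ^ (2 * m) - q ^ (2 * m + 1))) * truncMoment q M m
        - q ^ M * truncMoment q M (m + 1)
        - q ^ M * ((1 - q ^ (2 * m)) * (1 - q ^ (2 * m - 1))) * truncMoment q M (m - 1) := by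
  have h : contQHermite q (2 * m) * truncWeight q (M + 1) =
      ((1 + q ^ M) ^ 2 - q ^ M * (2 - q ^ (2 * m) - q ^ (2 * m + 1))) •
          (contQHermite q (2 * m) * truncWeight q M)
        - q ^ M • (contQHermite q (2 * (m + 1)) * truncWeight q M)
        - (q ^ M * ((1 - q ^ (2 * m)) * (1 - q ^ (2 * m - 1)))) •
          (contQHermite q (2 * (m - 1)) * truncWeight q M) := by
    have hX := X_sq_mul_contQHermite q (2 * m)
    rw [show 2 * m - 2 = 2 * (m - 1) by lia, show 2 * m + 2 = 2 * (m + 1) by lia] at hX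
    rw [truncWeight, prod_range_succ, ← truncWeight]
    simp only [smul_eq_C_mul, C_sub, C_mul] at hX ⊢
    linear_combination (-C (q ^ M) * truncWeight q M) * hX
  simp only [truncMoment, h, map_sub, map_smul, smul_eq_mul]

/- The coefficient recurrence of `truncMoment_add_one` collapses to a single term once the moments
with the same truncation are proportional to each other. -/
lemma truncMoment_add_one_of_forall {M : ℕ}
    (h : ∀ m, (1 - q ^ (m + M + 1)) * truncMoment q M (m + 1) =
      q ^ M * (1 - q ^ (2 * m + 1)) * (1 + q ^ (m + 1)) * truncMoment q M m) (m : ℕ) :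
    (1 - q ^ (m + M + 1)) * truncMoment q (M + 1) m =
      q ^ m * (1 - q ^ (2 * M + 1)) * (1 + q ^ M) * truncMoment q M m := by
  have hm := h m
  rw [truncMoment_add_one]
  cases m with
  | zero =>
    simp only [zero_add, mul_zero, pow_zero, sub_self, zero_mul, sub_zero] at hm ⊢
    linear_combination (-q ^ M) * hm
  | succ m =>
    have hpred := h m
    rw [Nat.add_sub_cancel, show 2 * (m + 1) - 1 = 2 * m + 1 by lia]
    linear_combination (-q ^ M) * hm + (1 - q ^ (m + 1 + M + 1)) * (1 - q ^ (m + 1)) * hpred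

lemma truncMoment_succ_right (hq : |q| < 1) (M m : ℕ) :
    (1 - q ^ (m + M + 1)) * truncMoment q M (m + 1) =
      q ^ M * (1 - q ^ (2 * m + 1)) * (1 + q ^ (m + 1)) * truncMoment q M m := by
  induction M generalizing m with
  | zero =>
    have h₀ := (qPoch_pos hq hq m).ne'
    have h₁ := (one_sub_pow_succ_pos hq m).ne'
    simp only [truncMoment, truncWeight, prod_range_zero, mul_one, cosIntegral_contQHermite hq]
    simp only [mul_add_one 2 m, qPoch_self_succ]
    field_simp
    ring
  | succ M ih =>
    have hm := truncMoment_add_one_of_forall ih m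
    have hm₁ := truncMoment_add_one_of_forall ih (m + 1)
    refine mul_left_cancel₀ (one_sub_pow_succ_pos hq (m + M)).ne' ?_
    linear_combination (1 - q ^ (m + M + 1)) * hm₁
      + q ^ (m + 1) * (1 - q ^ (2 * M + 1)) * (1 + q ^ M) * ih m
      - q ^ (M + 1) * (1 - q ^ (2 * m + 1)) * (1 + q ^ (m + 1)) * hm

lemma truncMoment_succ_left (hq : |q| < 1) (M m : ℕ) :
    (1 - q ^ (m + M + 1)) * truncMoment q (M + 1) m =
      q ^ m * (1 - q ^ (2 * M + 1)) * (1 + q ^ M) * truncMoment q M m :=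
  truncMoment_add_one_of_forall (truncMoment_succ_right hq M) m

lemma truncMoment_zero_right (hq : |q| < 1) (M : ℕ) :
    qPoch q q M ^ 2 * (1 + q ^ M) * truncMoment q M 0 = 2 * Real.pi * qPoch q q (2 * M) := by
  induction M with
  | zero =>
    rw [truncMoment, truncWeight, prod_range_zero, mul_one, cosIntegral_contQHermite hq]
    norm_num [qPoch_zero]
  | succ M ih =>
    have h := truncMoment_succ_left hq M 0
    rw [mul_add_one, qPoch_self_succ, qPoch_self_succ, qPoch_self_succ]
    simp only [zero_add, pow_zero, one_mul] at h
    linear_combination qPoch q q M ^ 2 * (1 - q ^ (2 * M + 2)) * h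
      + (1 - q ^ (2 * M + 1)) * (1 - q ^ (2 * M + 2)) * ih

end TruncatedMoments

section RogersWeight

variable {q : ℝ}

/-- The weight of the continuous q-Hermite polynomials in `x = 2 cos θ`, relative to `dθ`. -/
def rogersWeight (q x : ℝ) : ℝ := ∏' j : ℕ, ((1 + q ^ j) ^ 2 - q ^ j * x ^ 2)

lemma rogersWeight_neg (q x : ℝ) : rogersWeight q (-x) = rogersWeight q x := by
  simp only [rogersWeight, neg_sq]

lemma tendstoUniformlyOn_truncWeight (hq : |q| < 1) :
    TendstoUniformlyOn (fun M x => (truncWeight q M).eval x) (rogersWeight q) atTop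
      (Set.Icc (-2) 2) := by
  have hsummable := (summable_geometric_of_lt_one (abs_nonneg q) hq).mul_left 7
  have hbound (j : ℕ) (x : ℝ) (hx : x ∈ Set.Icc (-2) 2) :
      ‖q ^ j * (2 + q ^ j - x ^ 2)‖ ≤ 7 * |q| ^ j := by
    have hqj : |q ^ j| ≤ 1 := by
      rw [abs_pow]
      exact pow_le_one₀ (abs_nonneg q) hq.le
    have hfactor : |2 + q ^ j - x ^ 2| ≤ 7 := by
      rw [abs_le] at hqj ⊢
      constructor <;> nlinarith [hx.1, hx.2]
    rw [norm_mul, norm_pow, mul_comm, Real.norm_eq_abs, Real.norm_eq_abs]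
    gcongr
  have h := (hsummable.hasProdUniformlyOn_nat_one_add isCompact_Icc (Eventually.of_forall hbound)
    fun j => by fun_prop).tendstoUniformlyOn_finsetRange
  have hfactor (j : ℕ) (x : ℝ) :
      1 + q ^ j * (2 + q ^ j - x ^ 2) = (1 + q ^ j) ^ 2 - q ^ j * x ^ 2 := by ring
  simp only [hfactor] at h
  simp only [truncWeight, eval_prod, eval_sub, eval_mul, eval_pow, eval_C, eval_X]
  exact h

lemma two_mul_cos_mem_Icc (θ : ℝ) : 2 * Real.cos θ ∈ Set.Icc (-2) 2 :=
  abs_le.1 (abs_two_mul_cos_le θ)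

lemma continuous_rogersWeight_two_mul_cos (hq : |q| < 1) :
    Continuous fun θ => rogersWeight q (2 * Real.cos θ) :=
  ((tendstoUniformlyOn_truncWeight hq).continuousOn
    (Frequently.of_forall fun M => (truncWeight q M).continuous.continuousOn)).comp_continuous
    (by fun_prop) two_mul_cos_mem_Icc

/-- Integration of `P (2 cos θ)` over `[0, π]` against the weight `rogersWeight`. -/
def rogersFunctional (hq : |q| < 1) : ℝ[X] →ₗ[ℝ] ℝ where
  toFun P := ∫ θ in 0..Real.pi, P.eval (2 * Real.cos θ) * rogersWeight q (2 * Real.cos θ)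
  map_add' P Q := by
    have := continuous_rogersWeight_two_mul_cos hq
    simp only [eval_add, add_mul]
    exact intervalIntegral.integral_add (Continuous.intervalIntegrable (by fun_prop) _ _)
      (Continuous.intervalIntegrable (by fun_prop) _ _)
  map_smul' r P := by
    simp only [eval_smul, RingHom.id_apply, smul_eq_mul, mul_assoc,
      intervalIntegral.integral_const_mul]

lemma rogersFunctional_apply (hq : |q| < 1) (P : ℝ[X]) :
    rogersFunctional hq P =
      ∫ θ in 0..Real.pi, P.eval (2 * Real.cos θ) * rogersWeight q (2 * Real.cos θ) := rfl

lemma tendsto_cosIntegral_mul_truncWeight (hq : |q| < 1) (P : ℝ[X]) :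
    Tendsto (fun M => cosIntegral (P * truncWeight q M)) atTop (𝓝 (rogersFunctional hq P)) := by
  have hweight : TendstoUniformlyOn (fun M θ => (truncWeight q M).eval (2 * Real.cos θ))
      (fun θ => rogersWeight q (2 * Real.cos θ)) atTop (Set.uIcc 0 Real.pi) :=
    ((tendstoUniformlyOn_truncWeight hq).comp fun θ => 2 * Real.cos θ).mono
      fun θ _ => two_mul_cos_mem_Icc θ
  have hP : TendstoUniformlyOn (fun (_ : ℕ) θ => P.eval (2 * Real.cos θ))
      (fun θ => P.eval (2 * Real.cos θ)) atTop (Set.uIcc 0 Real.pi) :=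
    fun u hu => Eventually.of_forall fun _ _ _ => refl_mem_uniformity hu
  have hmul := hP.tendstoLocallyUniformlyOn.mul₀ hweight.tendstoLocallyUniformlyOn
    (Continuous.continuousOn (by fun_prop))
    (continuous_rogersWeight_two_mul_cos hq).continuousOn
  rw [tendstoLocallyUniformlyOn_iff_tendstoUniformlyOn_of_compact isCompact_uIcc] at hmul
  simp only [cosIntegral_apply, rogersFunctional_apply, eval_mul]
  exact hmul.tendsto_intervalIntegral_of_continuousOn
    (Eventually.of_forall fun M => Continuous.continuousOn (by fun_prop))

lemma tendsto_truncMoment (hq : |q| < 1) (m : ℕ) :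
    Tendsto (fun M => truncMoment q M m) atTop
      (𝓝 (rogersFunctional hq (contQHermite q (2 * m)))) :=
  tendsto_cosIntegral_mul_truncWeight hq _

lemma rogersFunctional_contQHermite_even (hq : |q| < 1) (m : ℕ) :
    rogersFunctional hq (contQHermite q (2 * m + 2)) = 0 := by
  have hpow := tendsto_pow_atTop_nhds_zero_of_abs_lt_one hq
  have hleft := ((hpow.comp (tendsto_add_atTop_nat (m + 1))).const_sub 1).mul
    (tendsto_truncMoment hq (m + 1))
  have hright := ((hpow.mul_const (1 - q ^ (2 * m + 1))).mul_const (1 + q ^ (m + 1))).mul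
    (tendsto_truncMoment hq m)
  have h := tendsto_nhds_unique hleft (hright.congr fun M => by
    rw [Function.comp_apply, show M + (m + 1) = m + M + 1 by lia, truncMoment_succ_right hq])
  simpa only [sub_zero, one_mul, zero_mul, mul_add_one] using h

lemma rogersFunctional_contQHermite_odd (hq : |q| < 1) (m : ℕ) :
    rogersFunctional hq (contQHermite q (2 * m + 1)) = 0 := by
  have h := intervalIntegral.integral_comp_sub_left (a := 0) (b := Real.pi)
    (fun θ => (contQHermite q (2 * m + 1)).eval (2 * Real.cos θ) *
      rogersWeight q (2 * Real.cos θ)) Real.pi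
  simp only [Real.cos_pi_sub, mul_neg, eval_neg_contQHermite, rogersWeight_neg, sub_self,
    sub_zero, Odd.neg_one_pow ⟨m, rfl⟩, one_mul, neg_mul, intervalIntegral.integral_neg] at h
  rw [rogersFunctional_apply]
  linarith

lemma rogersFunctional_contQHermite_succ (hq : |q| < 1) (n : ℕ) :
    rogersFunctional hq (contQHermite q (n + 1)) = 0 := by
  obtain ⟨m, rfl | rfl⟩ := n.even_or_odd'
  · exact rogersFunctional_contQHermite_odd hq m
  · exact rogersFunctional_contQHermite_even hq m

lemma rogersFunctional_one (hq : |q| < 1) :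
    rogersFunctional hq 1 = 2 * Real.pi / qPochInf q q := by
  have hP := tendsto_qPoch q hq
  have hleft := ((hP.pow 2).mul
    ((tendsto_pow_atTop_nhds_zero_of_abs_lt_one hq).const_add 1)).mul (tendsto_truncMoment hq 0)
  have hright := (hP.comp (tendsto_id.const_mul_atTop' two_pos)).const_mul (2 * Real.pi)
  have h := tendsto_nhds_unique hleft (hright.congr fun M => (truncMoment_zero_right hq M).symm)
  have hne := qPochInf_ne_zero hq hq
  rw [mul_zero, contQHermite_zero] at h
  rw [eq_div_iff hne]
  refine mul_left_cancel₀ hne ?_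
  linear_combination h

lemma rogersFunctional_contQHermite_mul_contQHermite (hq : |q| < 1) (m n : ℕ) :
    rogersFunctional hq (contQHermite q m * contQHermite q n) =
      if m = n then qPoch q q n * (2 * Real.pi / qPochInf q q) else 0 := by
  have hrec (n : ℕ) : X * contQHermite q n =
      contQHermite q (n + 1) + (1 - q ^ n) • contQHermite q (n - 1) := by
    rw [X_mul_contQHermite, smul_eq_C_mul]
  have hzero := contQHermite_zero q
  have hL := rogersFunctional_contQHermite_succ hq
  obtain h | rfl | h := lt_trichotomy m n
  · rw [if_neg h.ne, apply_mul_eq_zero_of_threeTerm hzero hrec hL h]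
  · rw [if_pos rfl]
    induction m with
    | zero => rw [hzero, mul_one, rogersFunctional_one, qPoch_zero, one_mul]
    | succ m ih =>
      rw [apply_mul_self_succ_of_threeTerm hzero hrec hL, ih, qPoch_self_succ, smul_eq_mul,
        mul_left_comm, mul_assoc]
  · rw [if_neg h.ne', mul_comm, apply_mul_eq_zero_of_threeTerm hzero hrec hL h]

end RogersWeight

/-! ### The conditional expectation -/

lemma hasSum_rogersFunctional_mul_contQHermite {q x ρ : ℝ} (hq : |q| < 1) (hx : |x| ≤ 2)
    (hρ : |ρ| < 1) (P : ℝ[X]) :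
    HasSum (fun n => (contQHermite q n).eval x / qPoch q q n * ρ ^ n *
        rogersFunctional hq (P * contQHermite q n))
      (∫ θ in 0..Real.pi, P.eval (2 * Real.cos θ) * mehlerKernel q (2 * Real.cos θ) x ρ *
        rogersWeight q (2 * Real.cos θ)) := by
  have hw := continuous_rogersWeight_two_mul_cos hq
  obtain ⟨D, hD⟩ := exists_abs_mehlerCoeff_le hq
  have hρ' : |(|ρ|)| < 1 := by rwa [abs_abs]
  have hbound (n : ℕ) (θ : ℝ) :
      ‖P.eval (2 * Real.cos θ) * (mehlerCoeff q (2 * Real.cos θ) x n * ρ ^ n) *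
          rogersWeight q (2 * Real.cos θ)‖ ≤
        D * (((n : ℝ) + 1) ^ 2 * |ρ| ^ n) *
          |P.eval (2 * Real.cos θ) * rogersWeight q (2 * Real.cos θ)| := by
    rw [mul_right_comm, norm_mul, mul_comm, norm_mul (mehlerCoeff _ _ _ _), norm_pow,
      ← mul_assoc D]
    exact mul_le_mul_of_nonneg_right (mul_le_mul_of_nonneg_right
      (hD n _ _ (abs_two_mul_cos_le θ) hx) (by positivity)) (norm_nonneg _)
  have hcont (n : ℕ) : Continuous fun θ =>
      P.eval (2 * Real.cos θ) * (mehlerCoeff q (2 * Real.cos θ) x n * ρ ^ n) *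
        rogersWeight q (2 * Real.cos θ) := by
    simp only [mehlerCoeff]
    fun_prop
  have hsum := intervalIntegral.hasSum_integral_of_dominated_convergence (μ := volume)
    (a := 0) (b := Real.pi) _
    (fun n => (hcont n).aestronglyMeasurable)
    (fun n => Eventually.of_forall fun θ _ => hbound n θ)
    (Eventually.of_forall fun θ _ =>
      ((summable_add_one_pow_mul_pow 2 hρ').mul_left D).mul_right _)
    (by simp only [tsum_mul_right]; exact Continuous.intervalIntegrable (by fun_prop) _ _)
    (Eventually.of_forall fun θ _ =>
      ((hasSum_mehler hq (abs_two_mul_cos_le θ) hx hρ).mul_left _).mul_right _)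
  refine hsum.congr_fun fun n => ?_
  rw [rogersFunctional_apply, ← intervalIntegral.integral_const_mul]
  congr! 2
  rw [mehlerCoeff, eval_mul]
  ring

lemma integral_contQHermite_mul_mehlerKernel {q x ρ : ℝ} (hq : |q| < 1) (hx : |x| ≤ 2)
    (hρ : |ρ| < 1) (n : ℕ) :
    ∫ θ in 0..Real.pi, (contQHermite q n).eval (2 * Real.cos θ) *
        mehlerKernel q (2 * Real.cos θ) x ρ * rogersWeight q (2 * Real.cos θ) =
      2 * Real.pi / qPochInf q q * (ρ ^ n * (contQHermite q n).eval x) := by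
  refine (hasSum_rogersFunctional_mul_contQHermite hq hx hρ _).unique ?_
  simp only [rogersFunctional_contQHermite_mul_contQHermite]
  convert hasSum_single n fun m hm => ?_ using 1
  · have := (qPoch_pos hq hq n).ne'
    rw [if_pos rfl]
    field_simp
  · rw [if_neg hm.symm, mul_zero]

lemma setIntegral_div_sqrt_eq_integral_cos {s : ℝ} (hs : 0 < s) (F : ℝ → ℝ) :
    ∫ x in Set.Icc (-(2 / s)) (2 / s), F (s * x) / √(4 - (s * x) ^ 2) =
      s⁻¹ * ∫ θ in 0..Real.pi, F (2 * Real.cos θ) := by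
  have hscale (x : ℝ) :
      F (s * x) / √(4 - (s * x) ^ 2) =
        F (2 * (s / 2 * x)) * √(1 - (s / 2 * x) ^ 2)⁻¹ * 2⁻¹ := by
    have hsqrt : √(4 - (s * x) ^ 2) = 2 * √(1 - (s / 2 * x) ^ 2) := by
      rw [show 4 - (s * x) ^ 2 = 2 ^ 2 * (1 - (s / 2 * x) ^ 2) by ring,
        Real.sqrt_mul (by positivity), Real.sqrt_sq zero_le_two]
    rw [hsqrt, Real.sqrt_inv, show 2 * (s / 2 * x) = s * x by ring, div_eq_mul_inv, mul_inv]
    ring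
  have hbound : s / 2 * (2 / s) = 1 := by field_simp
  have hle : -(2 / s) ≤ 2 / s := by linarith [div_pos two_pos hs]
  rw [integral_Icc_eq_integral_Ioc, ← intervalIntegral.integral_of_le hle]
  simp only [hscale]
  rw [intervalIntegral.integral_comp_mul_left
      (fun u => F (2 * u) * √(1 - u ^ 2)⁻¹ * 2⁻¹) (by positivity), mul_neg, hbound,
    intervalIntegral.integral_mul_const, ← Chebyshev.integral_measureT (fun u => F (2 * u)),
    Chebyshev.integral_measureT_eq_integral_cos, smul_eq_mul]
  field_simp

section Density

variable {q s : ℝ}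

lemma sqrt_one_sub_eq (hs₀ : 0 < s) (hs : s ^ 2 = 1 - q) : √(1 - q) = s := by
  rw [← hs, Real.sqrt_sq hs₀.le]

lemma Sq_eq_Icc (hs₀ : 0 < s) (hs : s ^ 2 = 1 - q) : Sq q = Set.Icc (-(2 / s)) (2 / s) := by
  rw [Sq, sqrt_one_sub_eq hs₀ hs]

lemma abs_mul_le_two_of_mem_Sq {x : ℝ} (hs₀ : 0 < s) (hs : s ^ 2 = 1 - q) (hx : x ∈ Sq q) :
    |s * x| ≤ 2 := by
  rw [Sq_eq_Icc hs₀ hs, Set.mem_Icc, ← abs_le, le_div_iff₀ hs₀] at hx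
  rwa [abs_mul, abs_of_pos hs₀, mul_comm]

lemma Lk_one_eq (hs : s ^ 2 = 1 - q) (x : ℝ) (j : ℕ) :
    Lk q x 1 j = (1 + q ^ j) ^ 2 - q ^ j * (s * x) ^ 2 := by
  rw [Lk, ← hs]
  ring

lemma Wk_eq_mehlerFactor (hs : s ^ 2 = 1 - q) (x y t : ℝ) (k : ℕ) :
    Wk q x y t k = mehlerFactor (s * x) (s * y) (t * q ^ k) := by
  rw [Wk, mehlerFactor, ← hs]
  ring

lemma fN_eq_rogersWeight {x : ℝ} (hs₀ : 0 < s) (hs : s ^ 2 = 1 - q) (hx : x ∈ Sq q) :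
    fN q x =
      qPochInf q q * s / (2 * Real.pi) * (rogersWeight q (s * x) / √(4 - (s * x) ^ 2)) := by
  have hL₀ : Lk q x 1 0 = 4 - (s * x) ^ 2 := by
    rw [Lk_one_eq hs]
    norm_num
  rw [fN, if_pos hx, hL₀, sqrt_one_sub_eq hs₀ hs, rogersWeight, mul_div_mul_comm]
  simp only [Lk_one_eq hs]

lemma fCN_eq_fN_mul_mehlerKernel (hs : s ^ 2 = 1 - q) (x y ρ : ℝ) :
    fCN q y ρ x = fN q x * mehlerKernel q (s * x) (s * y) ρ := by
  simp only [fCN, mehlerKernel, Wk_eq_mehlerFactor hs, mul_div_assoc]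

end Density

/-- `∫_{S(q)} H_n(x|q)·f_CN(x|y,ρ,q) dx = ρⁿ·H_n(y|q)`. -/
theorem integral_qHermite_fCN (q ρ y : ℝ) (hq : |q| < 1) (hρ : |ρ| < 1) (hy : y ∈ Sq q)
    (n : ℕ) (hn : 1 ≤ n) :
    ∫ x in Sq q, qHermite q n x * fCN q y ρ x = ρ ^ n * qHermite q n y := by
  obtain ⟨s, hs₀, hs⟩ : ∃ s, 0 < s ∧ s ^ 2 = 1 - q :=
    have hq₁ : 0 < 1 - q := sub_pos.2 (abs_lt.1 hq).2
    ⟨√(1 - q), Real.sqrt_pos.2 hq₁, Real.sq_sqrt hq₁.le⟩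
  have hP := qPochInf_ne_zero hq hq
  have hintegrand : ∀ x ∈ Sq q, qHermite q n x * fCN q y ρ x =
      qPochInf q q * s / (2 * Real.pi * s ^ n) * ((contQHermite q n).eval (s * x) *
        mehlerKernel q (s * x) (s * y) ρ * rogersWeight q (s * x) / √(4 - (s * x) ^ 2)) := by
    intro x hx
    rw [fCN_eq_fN_mul_mehlerKernel hs, fN_eq_rogersWeight hs₀ hs hx, eval_mul_contQHermite hs]
    field_simp
  rw [setIntegral_congr_fun (s := Sq q) measurableSet_Icc hintegrand, integral_const_mul,
    Sq_eq_Icc hs₀ hs,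
    setIntegral_div_sqrt_eq_integral_cos hs₀ fun x =>
      (contQHermite q n).eval x * mehlerKernel q x (s * y) ρ * rogersWeight q x,
    integral_contQHermite_mul_mehlerKernel hq (abs_mul_le_two_of_mem_Sq hs₀ hs hy) hρ,
    eval_mul_contQHermite hs]
  field_simp
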